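/- Let G = (V ∪ {s}, E) be a finite sandpile graph, Q ⊆ V, and for η ∈ R_G let W_0(η) = U^{(1)}_I be the set of vertices left unburnt by phase one of burning based on Q (so W_0(η) ⊇ Q). For Q ⊆ W ⊆ V, let G_W^* be the auxiliary sandpile graph on W ∪ {s} with multiplicities b*_{xy} = b_{xy} for x,y ∈ W, b*_{xs} = Σ_{z ∈ (V∪{s})\W} b_{xz} for x ∈ Q, and b*_{xs} = 0 for x ∈ W \ Q. Then for every η ∈ R_G: W_0(η) = W if and only if η ∈ E_{V,W} and η_W ∈ R_{G_W^*} (recurrence in G_W^* meaning: η_W (x) < deg_{G_W^*}(x) for all x ∈ W and η_W is ample in G_W^* for every nonempty F ⊆ W). -/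

import Mathlib

open scoped Classical

namespace Sandpile

/-- A finite sandpile multigraph on vertex set `α` (which plays the role of `V ∪ {s}`),
given by a distinguished sink and symmetric edge multiplicities. -/
structure Graph (α : Type*) where
  sink : α
  b : α → α → ℕ

namespace Graph

variable {α : Type*} [Fintype α] [DecidableEq α] (G : Graph α)

/-- The non-sink vertices (the set `V`). -/
def VSet : Finset α := Finset.univ.erase G.sink

/-- Degree restricted to a finite set of vertices: `deg_F(x) = ∑_{y ∈ F} b_{xy}`. -/
def degIn (F : Finset α) (x : α) : ℕ := ∑ y ∈ F, G.b x y

/-- Total degree `deg_G(x)`. -/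
def deg (x : α) : ℕ := ∑ y, G.b x y

/-- `G` is a genuine finite sandpile graph: symmetric multiplicities, no loops, connected. -/
def IsSandpileGraph : Prop :=
  (∀ x y, G.b x y = G.b y x) ∧ (∀ x, G.b x x = 0) ∧
    ∀ x y : α, Relation.ReflTransGen (fun u v => 0 < G.b u v) x y

/-- Connectivity of the subgraph induced on the vertex set `S`. -/
def ConnectedOn (S : Set α) : Prop :=
  ∀ x ∈ S, ∀ y ∈ S,
    Relation.ReflTransGen (fun u v => u ∈ S ∧ v ∈ S ∧ 0 < G.b u v) x y

/-- A sandpile is stable if every non-sink vertex carries fewer particles than its degree. -/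
def Stable (η : α → ℕ) : Prop := ∀ x ∈ G.VSet, η x < G.deg x

/-- `η` is ample for `F` if some vertex of `F` has at least `deg_F` particles. -/
def AmpleFor (η : α → ℕ) (F : Finset α) : Prop := ∃ x ∈ F, G.degIn F x ≤ η x

/-- Dhar's burning test: recurrent = stable and ample for every nonempty `F ⊆ V`. -/
def Recurrent (η : α → ℕ) : Prop :=
  G.Stable η ∧ ∀ F ⊆ G.VSet, F.Nonempty → G.AmpleFor η F

/-- Remove one particle at `w` (`η - δ_w`). -/
def SubOne (η : α → ℕ) (w : α) : α → ℕ := fun x => if x = w then η x - 1 else η x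

/-- `η` and `ξ` agree on `W` (restriction `η_W = ξ_W`). -/
def EqOn (η ξ : α → ℕ) (W : Finset α) : Prop := ∀ x ∈ W, η x = ξ x

/-- `ξ` is (generalized) minimal on `W`: it extends to a recurrent sandpile, and no
recurrent extension stays recurrent after removing a particle from a vertex of `W`.
(`η - δ_w ∉ R_G` holds automatically if `η w = 0`, as then `η - δ_w` is not a configuration.) -/
def Minimal (W : Finset α) (ξ : α → ℕ) : Prop :=
  (∃ η, G.Recurrent η ∧ EqOn η ξ W) ∧
    ∀ η, G.Recurrent η → EqOn η ξ W → ∀ w ∈ W, ¬(1 ≤ η w ∧ G.Recurrent (SubOne η w))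

/-- `ν_G[P]`: the uniform probability of the event `P` under the uniform measure on
recurrent configurations (configurations are normalized to vanish at the sink). -/
noncomputable def prob (P : (α → ℕ) → Prop) : ℝ :=
  (Nat.card {η : α → ℕ // η G.sink = 0 ∧ G.Recurrent η ∧ P η} : ℝ) /
    (Nat.card {η : α → ℕ // η G.sink = 0 ∧ G.Recurrent η} : ℝ)

/-- The graph Laplacian with the sink row and column deleted. -/
noncomputable def lapRed :
    Matrix {x : α // x ≠ G.sink} {x : α // x ≠ G.sink} ℝ :=
  Matrix.of fun x y =>
    if (x : α) = (y : α) then (G.deg ↑x : ℝ) else -(G.b ↑x ↑y : ℝ)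

/-- `H = (Δ')⁻¹`, extended by `0` on the sink. -/
noncomputable def Hfun (x y : α) : ℝ :=
  if hx : x = G.sink then 0
  else if hy : y = G.sink then 0
  else (G.lapRed)⁻¹ ⟨x, hx⟩ ⟨y, hy⟩

/-- Oriented edges of the multigraph `G`: an edge from `p.1` to `p.2.1`, with copy
index `p.2.2` (parallel edges are distinct). -/
abbrev OEdge (G : Graph α) : Type _ := {p : α × α × ℕ // p.2.2 < G.b p.1 p.2.1}

/-- `K_G(e,f) = δ_{ef} - Y_G(e,f)` where `Y_G` is the transfer current matrix. -/
noncomputable def Kmat (e f : G.OEdge) : ℝ :=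
  (if e = f then 1 else 0) -
    (G.Hfun e.1.1 f.1.1 - G.Hfun e.1.1 f.1.2.1 - G.Hfun e.1.2.1 f.1.1 +
      G.Hfun e.1.2.1 f.1.2.1)

/-- Unburnt sets of phase one of the burning algorithm based on `Q`:
`U_0 = V`, `U_i = U_{i-1} \ B_i` with `B_i = {x ∈ U_{i-1} \ Q : η x ≥ deg_{U_{i-1}} x}`. -/
def U1 (η : α → ℕ) (Q : Finset α) : ℕ → Finset α
  | 0 => G.VSet
  | i + 1 => (U1 η Q i).filter fun x => x ∈ Q ∨ η x < G.degIn (U1 η Q i) x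

/-- The final unburnt set `U^{(1)}_I` of phase one (the sequence `U1` is decreasing,
hence stabilizes after at most `|α|` steps). -/
def U1lim (η : α → ℕ) (Q : Finset α) : Finset α := G.U1 η Q (Fintype.card α)

/-- Unburnt sets of phase two of the burning algorithm based on `Q`. -/
def U2 (η : α → ℕ) (Q : Finset α) : ℕ → Finset α
  | 0 => G.U1lim η Q
  | i + 1 => (U2 η Q i).filter fun x => η x < G.degIn (U2 η Q i) x

/-- Recurrence in the wired graph `G_W` (note `deg_{G_W}(x) = deg_G(x)` for `x ∈ W`,
and `deg_F` for `F ⊆ W` is the same in `G_W` and `G`). -/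
def WiredRecurrent (W : Finset α) (ξ : α → ℕ) : Prop :=
  (∀ x ∈ W, ξ x < G.deg x) ∧ ∀ F ⊆ W, F.Nonempty → ∃ x ∈ F, G.degIn F x ≤ ξ x

/-- `ξ` is minimal in the wired graph `G_W`. -/
def WiredMinimal (W : Finset α) (ξ : α → ℕ) : Prop :=
  G.WiredRecurrent W ξ ∧ ∀ w ∈ W, ¬(1 ≤ ξ w ∧ G.WiredRecurrent W (SubOne ξ w))

/-- Entry points `E(ξ,W)` of `ξ ∈ R_{G_W}`: vertices burnable at the first step. -/
def entryPoints (W : Finset α) (ξ : α → ℕ) : Finset α :=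
  W.filter fun w => G.degIn W w ≤ ξ w

/-- `x` is burnable given the burnt set `S`: `η(x) ≥ deg_G(x) − ∑_{y ∈ S} b_{xy}`. -/
def Burnable (η : α → ℕ) (S : Finset α) (x : α) : Prop :=
  G.degIn (Finset.univ \ S) x ≤ η x

/-- A burning sequence starting from the burnt set `S`. -/
def IsBurnSeq (η : α → ℕ) : Finset α → List α → Prop
  | _, [] => True
  | S, x :: l => x ∉ S ∧ G.Burnable η S x ∧ IsBurnSeq η (insert x S) l

/-- `B` is a burnt set for `η`: some burning sequence from `{s}` burns exactly `B`. -/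
def IsBurntSet (η : α → ℕ) (B : Finset α) : Prop :=
  ∃ l : List α, G.IsBurnSeq η {G.sink} l ∧ l.toFinset = B

/-- Reachability within the vertex set `S`. -/
def ReachIn (S : Set α) (x y : α) : Prop :=
  Relation.ReflTransGen (fun u v => u ∈ S ∧ v ∈ S ∧ 0 < G.b u v) x y

/-- `C` is a connected component of the subgraph induced on `(V ∪ {s}) \ W`
that does not contain the sink. -/
def IsHoleComp (W C : Finset α) : Prop :=
  C.Nonempty ∧ G.sink ∉ C ∧
    ∀ x ∈ C, ∀ y : α, y ∈ C ↔ y ∉ W ∧ G.ReachIn {a : α | a ∉ W} x y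

/-- Adjacency induced by a finite set `t` of (undirected, indexed) edges. -/
def edgeRel (t : Finset (Sym2 α × ℕ)) (u v : α) : Prop := ∃ k : ℕ, (s(u, v), k) ∈ t

/-- `t` is a spanning tree of the multigraph `G`: it consists of edges of `G`
(parallel edges distinct), it spans (connected), and every edge is a bridge
(equivalently, it is acyclic). -/
def IsSpanningTree (t : Finset (Sym2 α × ℕ)) : Prop :=
  (∀ p ∈ t, ∃ x y : α, p.1 = s(x, y) ∧ p.2 < G.b x y) ∧
  (∀ u v : α, Relation.ReflTransGen (edgeRel t) u v) ∧
  ∀ p ∈ t, ∀ x y : α, p.1 = s(x, y) →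
    ¬ Relation.ReflTransGen (edgeRel (t.erase p)) x y

/-- Adjacency induced by a set of (undirected, indexed) edges. -/
def edgeRelSet (t : Set (Sym2 α × ℕ)) (u v : α) : Prop := ∃ k : ℕ, (s(u, v), k) ∈ t

/-- Set version of `IsSpanningTree`. -/
def IsSpanningTreeSet (t : Set (Sym2 α × ℕ)) : Prop :=
  (∀ p ∈ t, ∃ x y : α, p.1 = s(x, y) ∧ p.2 < G.b x y) ∧
  (∀ u v : α, Relation.ReflTransGen (edgeRelSet t) u v) ∧
  ∀ p ∈ t, ∀ x y : α, p.1 = s(x, y) →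
    ¬ Relation.ReflTransGen (edgeRelSet (t \ {p})) x y

/-- The step at which `x` burns in phase one (0 for the sink; `sInf ∅ = 0` if `x`
never burns in phase one). -/
noncomputable def p1time (η : α → ℕ) (Q : Finset α) (x : α) : ℕ :=
  sInf {i : ℕ | x ∉ G.U1 η Q i}

/-- The step at which `x` burns in phase two. -/
noncomputable def p2time (η : α → ℕ) (Q : Finset α) (x : α) : ℕ :=
  sInf {i : ℕ | x ∉ G.U2 η Q i}

/-- Vertices burnt at step `i` of phase one (`B^{(1)}_0 = {s}`). -/
def B1 (η : α → ℕ) (Q : Finset α) : ℕ → Finset α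
  | 0 => {G.sink}
  | i + 1 => G.U1 η Q i \ G.U1 η Q (i + 1)

/-- Vertices burnt at step `i` of phase two (`B^{(2)}_0` = everything burnt in phase
one, including the sink). -/
def B2 (η : α → ℕ) (Q : Finset α) : ℕ → Finset α
  | 0 => Finset.univ \ G.U1lim η Q
  | i + 1 => G.U2 η Q i \ G.U2 η Q (i + 1)

/-- The set `B^{(p)}_{i-1}` of vertices burnt at the step preceding the step at which
`x` burns (in the appropriate phase). -/
noncomputable def prevBurnt (η : α → ℕ) (Q : Finset α) (x : α) : Finset α :=
  if x ∈ G.U1lim η Q then G.B2 η Q (G.p2time η Q x - 1)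
  else G.B1 η Q (G.p1time η Q x - 1)

/-- The set `D = B^{(p)}_0 ∪ ⋯ ∪ B^{(p)}_{i-1}` of vertices burnt strictly before `x`
in the phase in which `x` burns. -/
noncomputable def burntBefore (η : α → ℕ) (Q : Finset α) (x : α) : Finset α :=
  if x ∈ G.U1lim η Q then Finset.univ \ G.U2 η Q (G.p2time η Q x - 1)
  else Finset.univ \ G.U1 η Q (G.p1time η Q x - 1)

/-- `j = η(x) − deg_G(x) + n_x` with `n_x = ∑_{y ∈ D} b_{xy}`. -/
noncomputable def jX (η : α → ℕ) (Q : Finset α) (x : α) : ℕ :=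
  η x + G.degIn (G.burntBefore η Q x) x - G.deg x

/-- The defining property of the edge `e_x` of the burning bijection based on `Q`:
`e_x` has tail `x`, head burnt at the previous step, and exactly `j` smaller elements
of `P_x` under the given edge order `lt x`. -/
def EdgeSpec (lt : α → G.OEdge → G.OEdge → Prop) (η : α → ℕ) (Q : Finset α)
    (x : α) (e : G.OEdge) : Prop :=
  e.1.1 = x ∧ e.1.2.1 ∈ G.prevBurnt η Q x ∧
    {f : G.OEdge | f.1.1 = x ∧ f.1.2.1 ∈ G.prevBurnt η Q x ∧ lt x f e}.ncard =
      G.jX η Q x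

/-- The (oriented) spanning tree `t(η) = {e_x : x ∈ V}` assigned to `η` by the
burning bijection based on `Q`. -/
def treeOf (lt : α → G.OEdge → G.OEdge → Prop) (η : α → ℕ) (Q : Finset α) :
    Set G.OEdge :=
  {e | ∃ x ∈ G.VSet, G.EdgeSpec lt η Q x e}

/-- Forget the orientation of an oriented edge. -/
def undir (e : G.OEdge) : Sym2 α × ℕ := (s(e.1.1, e.1.2.1), e.1.2.2)

/-- Total burning order: phase-one vertices first (at their phase-one step), then
phase-two vertices. -/
noncomputable def burnOrder (η : α → ℕ) (Q : Finset α) (x : α) : ℕ :=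
  if x ∈ G.U1lim η Q then Fintype.card α + 1 + G.p2time η Q x else G.p1time η Q x

/-- Edge multiplicities of the auxiliary graph `G_W^*` (on vertex set `W ∪ {s}`):
`b*_{xy} = b_{xy}` for `x,y ∈ W`; `b*_{xs} = ∑_{z ∉ W} b_{xz}` for `x ∈ Q` and
`b*_{xs} = 0` for `x ∈ W \ Q`. -/
def bstar (Q W : Finset α) (x y : α) : ℕ :=
  if x ∈ W ∧ y ∈ W then G.b x y
  else if x ∈ W ∧ y = G.sink then
    if x ∈ Q then ∑ z ∈ Finset.univ \ W, G.b x z else 0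
  else if y ∈ W ∧ x = G.sink then
    if y ∈ Q then ∑ z ∈ Finset.univ \ W, G.b z y else 0
  else 0

/-- Recurrence in the auxiliary graph `G_W^*`. -/
def StarRecurrent (Q W : Finset α) (ζ : α → ℕ) : Prop :=
  (∀ x ∈ W, ζ x < ∑ y ∈ insert G.sink W, G.bstar Q W x y) ∧
    ∀ F ⊆ W, F.Nonempty → ∃ x ∈ F, (∑ y ∈ F, G.bstar Q W x y) ≤ ζ x

end Graph

end Sandpile

open Sandpile

/-!
Call `A` forbidden off `Q` if `η x < deg_A(x)` for every `x ∈ A \ Q`. Phase one based on `Q` never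
burns a vertex of such an `A ⊆ V`, and when it stops, the unburnt vertices form such a set: so
`W₀(η)` is the largest subset of `V` that is forbidden off `Q`. Hence `W₀(η) = W` says that `W` is
forbidden off `Q` and that phase one based on `W` burns all of `V \ W`. In `G_W^*` a vertex of
`W \ Q` has degree `deg_W`, while a vertex of `Q` keeps its degree `deg_G`, so stability in `G_W^*`
is stability in `G` on `W` together with `W` being forbidden off `Q`; ampleness for subsets of `W`
is the same in both graphs.
-/

namespace Sandpile.Graph

section ForbiddenOff

variable {α : Type*} (G : Graph α)

/-- `A` is a forbidden subconfiguration of `η`, except that nothing is required of the vertices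
of `Q`: when `A ⊆ V`, burning based on `Q` leaves all of `A` unburnt. Neither `Q ⊆ A` nor `A ⊆ V`
is part of the definition. -/
def ForbiddenOff (η : α → ℕ) (Q A : Finset α) : Prop := ∀ x ∈ A, x ∉ Q → η x < G.degIn A x

variable {G} {η : α → ℕ} {Q Q' A B : Finset α}

theorem degIn_mono (h : A ⊆ B) (x : α) : G.degIn A x ≤ G.degIn B x :=
  Finset.sum_le_sum_of_subset h

theorem degIn_le_deg [Fintype α] (A : Finset α) (x : α) : G.degIn A x ≤ G.deg x :=
  degIn_mono A.subset_univ x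

theorem ForbiddenOff.mono (h : G.ForbiddenOff η Q A) (hQ : Q ⊆ Q') : G.ForbiddenOff η Q' A :=
  fun x hx hxQ' => h x hx fun hxQ => hxQ' (hQ hxQ)

theorem forbiddenOff_of_subset (h : A ⊆ Q) : G.ForbiddenOff η Q A :=
  fun _ hx hxQ => absurd (h hx) hxQ

end ForbiddenOff

section Burning

variable {α : Type*} [Fintype α] [DecidableEq α] (G : Graph α) (η : α → ℕ) (Q : Finset α)

theorem U1_antitone : Antitone (G.U1 η Q) :=
  antitone_nat_of_succ_le fun _ => Finset.filter_subset _ _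

theorem U1lim_subset_VSet : G.U1lim η Q ⊆ G.VSet :=
  U1_antitone G η Q (Nat.zero_le _)

theorem U1_card_add_one : G.U1 η Q (Fintype.card α + 1) = G.U1lim η Q := by
  have hmono : Monotone fun n => (G.U1 η Q n)ᶜ.card := fun _ _ hmn =>
    Finset.card_le_card (Finset.compl_subset_compl.2 (U1_antitone G η Q hmn))
  have eq_succ_of_card_eq (n : ℕ) (h : (G.U1 η Q n)ᶜ.card = (G.U1 η Q (n + 1))ᶜ.card) :
      G.U1 η Q n = G.U1 η Q (n + 1) :=
    compl_injective <| Finset.eq_of_subset_of_card_le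
      (Finset.compl_subset_compl.2 (U1_antitone G η Q n.le_succ)) h.ge
  have hstab (n : ℕ) (h : (G.U1 η Q n)ᶜ.card = (G.U1 η Q (n + 1))ᶜ.card) :
      (G.U1 η Q (n + 1))ᶜ.card = (G.U1 η Q (n + 2))ᶜ.card := by
    rw [U1, U1, ← eq_succ_of_card_eq n h]
  have hcard : (G.U1 η Q (Fintype.card α + 1))ᶜ.card = (G.U1 η Q (Fintype.card α))ᶜ.card :=
    Nat.stabilises_of_monotone hmono (fun _ => Finset.card_le_univ _) hstab (Nat.le_succ _)
  exact (eq_succ_of_card_eq _ hcard.symm).symm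

theorem forbiddenOff_U1lim : G.ForbiddenOff η Q (G.U1lim η Q) := by
  intro x hx hxQ
  rw [← U1_card_add_one, U1, Finset.mem_filter] at hx
  exact hx.2.resolve_left hxQ

variable {G η Q} {Q' A : Finset α}

theorem ForbiddenOff.subset_U1 (h : G.ForbiddenOff η Q A) (hA : A ⊆ G.VSet) (n : ℕ) :
    A ⊆ G.U1 η Q n := by
  induction n with
  | zero => exact hA
  | succ n ih =>
    intro x hx
    rw [U1, Finset.mem_filter]
    exact ⟨ih hx, or_iff_not_imp_left.2 fun hxQ => (h x hx hxQ).trans_le (degIn_mono ih x)⟩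

theorem ForbiddenOff.subset_U1lim (h : G.ForbiddenOff η Q A) (hA : A ⊆ G.VSet) :
    A ⊆ G.U1lim η Q :=
  h.subset_U1 hA _

theorem U1lim_mono (hQ : Q ⊆ Q') : G.U1lim η Q ⊆ G.U1lim η Q' :=
  ((forbiddenOff_U1lim G η Q).mono hQ).subset_U1lim (U1lim_subset_VSet G η Q)

variable (G η Q) in
theorem U1lim_U1lim : G.U1lim η (G.U1lim η Q) = G.U1lim η Q := by
  have hsub : G.U1lim η Q ⊆ G.U1lim η (G.U1lim η Q) :=
    (forbiddenOff_of_subset subset_rfl).subset_U1lim (U1lim_subset_VSet G η Q)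
  have hforb : G.ForbiddenOff η Q (G.U1lim η (G.U1lim η Q)) := by
    intro x hx hxQ
    by_cases hxW : x ∈ G.U1lim η Q
    · exact (forbiddenOff_U1lim G η Q x hxW hxQ).trans_le (degIn_mono hsub x)
    · exact forbiddenOff_U1lim G η _ x hx hxW
  exact (hforb.subset_U1lim (U1lim_subset_VSet G η _)).antisymm hsub

theorem U1lim_eq_iff {W : Finset α} (hQW : Q ⊆ W) (hW : W ⊆ G.VSet) :
    G.U1lim η Q = W ↔ G.U1lim η W = W ∧ G.ForbiddenOff η Q W := by
  constructor
  · rintro rfl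
    exact ⟨U1lim_U1lim G η Q, forbiddenOff_U1lim G η Q⟩
  · rintro ⟨hlim, hforb⟩
    exact ((U1lim_mono hQW).trans_eq hlim).antisymm (hforb.subset_U1lim hW)

end Burning

section AuxiliaryGraph

variable {α : Type*} [Fintype α] [DecidableEq α] {G : Graph α} {W : Finset α}

theorem sink_notMem (hW : W ⊆ G.VSet) : G.sink ∉ W :=
  fun h => Finset.notMem_erase _ _ (hW h)

theorem Recurrent.wiredRecurrent {η : α → ℕ} (h : G.Recurrent η) (hW : W ⊆ G.VSet) :
    G.WiredRecurrent W η :=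
  ⟨fun x hx => h.1 x (hW hx), fun F hF => h.2 F (hF.trans hW)⟩

theorem sum_bstar_of_subset (Q : Finset α) {F : Finset α} (hF : F ⊆ W) {x : α} (hx : x ∈ W) :
    ∑ y ∈ F, G.bstar Q W x y = G.degIn F x :=
  Finset.sum_congr rfl fun _ hy => if_pos ⟨hx, hF hy⟩

theorem bstar_sink (Q : Finset α) (hs : G.sink ∉ W) {x : α} (hx : x ∈ W) :
    G.bstar Q W x G.sink = if x ∈ Q then G.degIn Wᶜ x else 0 := by
  simp [bstar, degIn, hs, hx, Finset.compl_eq_univ_sdiff]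

theorem sum_insert_sink_bstar (Q : Finset α) (hs : G.sink ∉ W) {x : α} (hx : x ∈ W) :
    ∑ y ∈ insert G.sink W, G.bstar Q W x y = if x ∈ Q then G.deg x else G.degIn W x := by
  rw [Finset.sum_insert hs, bstar_sink Q hs hx, sum_bstar_of_subset Q subset_rfl hx]
  split_ifs
  · exact Finset.sum_compl_add_sum W _
  · exact zero_add _

theorem starRecurrent_iff {Q : Finset α} {ζ : α → ℕ} (hs : G.sink ∉ W) :
    G.StarRecurrent Q W ζ ↔ G.WiredRecurrent W ζ ∧ G.ForbiddenOff ζ Q W := by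
  have hstable : (∀ x ∈ W, ζ x < ∑ y ∈ insert G.sink W, G.bstar Q W x y) ↔
      (∀ x ∈ W, ζ x < G.deg x) ∧ G.ForbiddenOff ζ Q W := by
    rw [ForbiddenOff, ← forall₂_and]
    refine forall₂_congr fun x hx => ?_
    have hle : G.degIn W x ≤ G.deg x := degIn_le_deg W x
    rw [sum_insert_sink_bstar Q hs hx]
    split_ifs with hxQ
    · simp [hxQ]
    · simpa [hxQ] using fun h => h.trans_le hle
  have hample : (∀ F ⊆ W, F.Nonempty → ∃ x ∈ F, ∑ y ∈ F, G.bstar Q W x y ≤ ζ x) ↔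
      ∀ F ⊆ W, F.Nonempty → ∃ x ∈ F, G.degIn F x ≤ ζ x := by
    refine forall₃_congr fun F hF _ => exists_congr fun x => and_congr_right fun hx => ?_
    rw [sum_bstar_of_subset Q hF (hF hx)]
  rw [StarRecurrent, WiredRecurrent, hstable, hample, and_right_comm]

end AuxiliaryGraph

end Sandpile.Graph

theorem statement_19_general {α : Type*} [Fintype α] [DecidableEq α] (G : Sandpile.Graph α)
    {Q W : Finset α} (hQW : Q ⊆ W) (hW : W ⊆ G.VSet) {η : α → ℕ} (hη : G.WiredRecurrent W η) :
    G.U1lim η Q = W ↔ (G.U1lim η W = W ∧ G.StarRecurrent Q W η) := by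
  rw [Graph.U1lim_eq_iff hQW hW, Graph.starRecurrent_iff (Graph.sink_notMem hW),
    and_iff_right hη]

/-- For `η ∈ R_G` and `Q ⊆ W ⊆ V`: the set `W₀(η)` of vertices left
unburnt by phase one of burning based on `Q` equals `W` if and only if `η ∈ E_{V,W}`
and the restriction `η_W` is recurrent in the auxiliary graph `G_W^*`. -/
theorem statement_19 {α : Type*} [Fintype α] [DecidableEq α] (G : Sandpile.Graph α)
    (hG : G.IsSandpileGraph) (Q W : Finset α) (hQW : Q ⊆ W) (hW : W ⊆ G.VSet) :
    ∀ η : α → ℕ, G.Recurrent η →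
      (G.U1lim η Q = W ↔ (G.U1lim η W = W ∧ G.StarRecurrent Q W η)) :=
  fun _ hη => statement_19_general G hQW hW (hη.wiredRecurrent hW)
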